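/- arXiv:1304.2328 — 2 statements merged into one kernel-verified Lean document; each statement's English description precedes it below -/
import Mathlib

section
/- Let X ∈ M_{n,m}(ℂ) have singular values σ₁ ≥ σ₂ ≥ … ≥ σ_{min(m,n)} ≥ 0 and fix 1 ≤ k ≤ min(m,n). Let r be the largest index with 1 ≤ r < k such that σ_r > (Σ_{i=r+1}^{min(m,n)} σ_i)/(k−r), taking r = 0 if no such index exists or if k = 1, and set σ̃ := (Σ_{i=r+1}^{min(m,n)} σ_i)/(k−r). Then the dual norm of the (k,2)-norm satisfies ‖X‖_{(k,2)}° = sqrt( Σ_{i=1}^r σ_i² + (k−r)σ̃² ). -/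
open scoped Kronecker ComplexOrder
open Matrix

namespace Ent

variable {ι κ : Type*} [Fintype ι] [Fintype κ]

/-- Inner product ⟨v,w⟩ = Σᵢ conj(v i) * (w i) (conjugate-linear in the first argument). -/
noncomputable def vinner (v w : ι → ℂ) : ℂ := dotProduct (star v) w

/-- An elementary (product) tensor a ⊗ b in ℂ^ι ⊗ ℂ^κ. -/
def prodVec (a : ι → ℂ) (b : κ → ℂ) : ι × κ → ℂ := fun p => a p.1 * b p.2

/-- `v` has Schmidt rank at most `k`. -/
def SchmidtRankLE (k : ℕ) (v : ι × κ → ℂ) : Prop :=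
  ∃ (a : Fin k → ι → ℂ) (b : Fin k → κ → ℂ), v = ∑ i, prodVec (a i) (b i)

/-- The rank-one operator |v⟩⟨w|. -/
noncomputable def ketBra (v : ι → ℂ) (w : κ → ℂ) : Matrix ι κ ℂ :=
  Matrix.vecMulVec v (star w)

/-- A finite family of vectors is orthonormal. -/
def Orthonormal' {N : Type*} [DecidableEq N] (v : N → ι → ℂ) : Prop :=
  ∀ i j, vinner (v i) (v j) = if i = j then 1 else 0

/-- The S(k)-norm of `X ∈ M_ι ⊗ M_κ`. -/
noncomputable def SkNorm (k : ℕ) (X : Matrix (ι × κ) (ι × κ) ℂ) : ℝ :=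
  sSup { r | ∃ v w : ι × κ → ℂ, vinner v v = 1 ∧ vinner w w = 1 ∧
    SchmidtRankLE k v ∧ SchmidtRankLE k w ∧
    r = ‖vinner v (X.mulVec w)‖ }

/-- The product numerical radius r_k^⊗. -/
noncomputable def prodRad (k : ℕ) (Y : Matrix (ι × κ) (ι × κ) ℂ) : ℝ :=
  sSup { r | ∃ v : ι × κ → ℂ, vinner v v = 1 ∧ SchmidtRankLE k v ∧
    r = ‖vinner v (Y.mulVec v)‖ }

/-- The norm ‖·‖_{γ,k}. -/
noncomputable def gammaNorm (k : ℕ) (X : Matrix (ι × κ) (ι × κ) ℂ) : ℝ :=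
  sInf { r | ∃ (N : ℕ) (c : Fin N → ℂ) (v w : Fin N → (ι × κ → ℂ)),
    (∀ i, vinner (v i) (v i) = 1 ∧ vinner (w i) (w i) = 1 ∧
      SchmidtRankLE k (v i) ∧ SchmidtRankLE k (w i)) ∧
    X = ∑ i, c i • ketBra (v i) (w i) ∧
    r = ∑ i, ‖c i‖ }

/-- `ρ` is a density matrix. -/
def IsDensity (ρ : Matrix ι ι ℂ) : Prop := ρ.PosSemidef ∧ ρ.trace = 1

/-- `ρ` has Schmidt number at most `k`: it is a convex combination of projections onto
unit vectors of Schmidt rank at most `k`. -/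
def SchmidtNumLE (k : ℕ) (ρ : Matrix (ι × κ) (ι × κ) ℂ) : Prop :=
  ∃ (N : ℕ) (p : Fin N → ℝ) (v : Fin N → (ι × κ → ℂ)),
    (∀ i, 0 ≤ p i ∧ vinner (v i) (v i) = 1 ∧ SchmidtRankLE k (v i)) ∧
    (∑ i, p i) = 1 ∧ ρ = ∑ i, p i • ketBra (v i) (v i)

/-- The robustness norm R_k on Hermitian operators. -/
noncomputable def Rk (k : ℕ) (Y : Matrix (ι × κ) (ι × κ) ℂ) : ℝ :=
  sInf { r | ∃ (c₁ c₂ : ℝ) (ρ₁ ρ₂ : Matrix (ι × κ) (ι × κ) ℂ),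
    0 ≤ c₁ ∧ 0 ≤ c₂ ∧ IsDensity ρ₁ ∧ IsDensity ρ₂ ∧
    SchmidtNumLE k ρ₁ ∧ SchmidtNumLE k ρ₂ ∧
    Y = c₁ • ρ₁ - c₂ • ρ₂ ∧ r = c₁ + c₂ }

/-- `Y` is k-block positive: ⟨v|Y|v⟩ ≥ 0 for every unit vector of Schmidt rank at most `k`. -/
def KBlockPos (k : ℕ) (Y : Matrix (ι × κ) (ι × κ) ℂ) : Prop :=
  ∀ v : ι × κ → ℂ, vinner v v = 1 → SchmidtRankLE k v →
    0 ≤ (vinner v (Y.mulVec v)).re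

/-- Dual of a norm on matrices, w.r.t. the Hilbert–Schmidt inner product ⟨W,X⟩ = Tr(Wᴴ X). -/
noncomputable def dualNormM (f : Matrix ι κ ℂ → ℝ) (X : Matrix ι κ ℂ) : ℝ :=
  sSup { r | ∃ W : Matrix ι κ ℂ, f W ≤ 1 ∧ r = ‖(Wᴴ * X).trace‖ }

/-- Dual of a norm, computed in the real Hilbert space of Hermitian matrices with the
Hilbert–Schmidt inner product ⟨W,Y⟩ = Tr(WY). -/
noncomputable def dualNormHerm (f : Matrix ι ι ℂ → ℝ) (Y : Matrix ι ι ℂ) : ℝ :=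
  sSup { r | ∃ W : Matrix ι ι ℂ, W.IsHermitian ∧ f W ≤ 1 ∧ r = |((W * Y).trace).re| }

/-- The Frobenius norm of a matrix. -/
noncomputable def frobNorm (X : Matrix ι κ ℂ) : ℝ :=
  Real.sqrt (∑ i, ∑ j, Complex.normSq (X i j))

/-- The (k,2)-norm: ‖X‖_{(k,2)} = sup { |Tr(XY)| : rank Y ≤ k, ‖Y‖_F ≤ 1 }. -/
noncomputable def kNorm (k : ℕ) (X : Matrix ι κ ℂ) : ℝ :=
  sSup { r | ∃ Y : Matrix κ ι ℂ, Y.rank ≤ k ∧ frobNorm Y ≤ 1 ∧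
    r = ‖(X * Y).trace‖ }

/-- The trace norm: the sum of the singular values, i.e. of the square roots of the
eigenvalues of Xᴴ X. -/
noncomputable def traceNorm [DecidableEq κ] (X : Matrix ι κ ℂ) : ℝ :=
  ∑ i, Real.sqrt ((Matrix.isHermitian_conjTranspose_mul_self X).eigenvalues i)

/-- The s(k) vector norm: sup of |⟨u,w⟩| over unit vectors u of Schmidt rank at most k. -/
noncomputable def skVecNorm (k : ℕ) (w : ι × κ → ℂ) : ℝ :=
  sSup { r | ∃ u : ι × κ → ℂ, vinner u u = 1 ∧ SchmidtRankLE k u ∧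
    r = ‖vinner u w‖ }

/-- Dual of a norm on vectors. -/
noncomputable def dualNormV (f : (ι × κ → ℂ) → ℝ) (v : ι × κ → ℂ) : ℝ :=
  sSup { r | ∃ w : ι × κ → ℂ, f w ≤ 1 ∧ r = ‖vinner w v‖ }

/-- The realignment map, L(X)_{(i,k),(j,l)} = X_{(i,j),(k,l)}. -/
def realign {m n : ℕ} (X : Matrix (Fin m × Fin n) (Fin m × Fin n) ℂ) :
    Matrix (Fin m × Fin m) (Fin n × Fin n) ℂ :=
  fun p q => X (p.1, q.1) (p.2, q.2)

/-- The projective tensor norm on M_{m,n} ⊗ M_{m,n}. -/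
noncomputable def projNorm {m n : ℕ} (Z : Matrix (Fin m × Fin m) (Fin n × Fin n) ℂ) : ℝ :=
  sInf { r | ∃ (N : ℕ) (A B : Fin N → Matrix (Fin m) (Fin n) ℂ),
    Z = ∑ i, A i ⊗ₖ B i ∧ r = ∑ i, traceNorm (A i) * traceNorm (B i) }


lemma sqrt_le_one_iff' {x : ℝ} : Real.sqrt x ≤ 1 ↔ x ≤ 1 := by
  rw [Real.sqrt_le_left zero_le_one, one_pow]

lemma vinner_eq_inner (v w : ι → ℂ) :
    vinner v w = inner ℂ (WithLp.toLp 2 v : EuclideanSpace ℂ ι) (WithLp.toLp 2 w) := by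
  rw [EuclideanSpace.inner_toLp_toLp, vinner, dotProduct_comm]

lemma vinner_conj (v w : ι → ℂ) : star (vinner v w) = vinner w v := by
  simp only [vinner, dotProduct, star_sum, star_mul', Pi.star_apply, star_star]
  exact Finset.sum_congr rfl fun j _ => mul_comm _ _

lemma bessel {N : Type*} [DecidableEq N] (s : Finset N) (v : N → ι → ℂ)
    (hv : ∀ i ∈ s, ∀ j ∈ s, vinner (v i) (v j) = if i = j then 1 else 0) (x : ι → ℂ) :
    ∑ i ∈ s, ‖vinner (v i) x‖ ^ 2 ≤ ∑ j, ‖x j‖ ^ 2 := by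
  have ho : Orthonormal ℂ (fun i : s => (WithLp.toLp 2 (v i) : EuclideanSpace ℂ ι)) := by
    rw [orthonormal_iff_ite]
    intro i j
    rw [← vinner_eq_inner, hv i i.2 j j.2]
    by_cases h : i = j
    · rw [if_pos h, if_pos (congrArg _ h)]
    · rw [if_neg h, if_neg (fun h' => h (Subtype.ext h'))]
  have := ho.sum_inner_products_le (s := Finset.univ) (WithLp.toLp 2 x : EuclideanSpace ℂ ι)
  rw [EuclideanSpace.norm_sq_eq] at this
  rw [← Finset.sum_coe_sort]
  simpa [vinner_eq_inner] using this

lemma trace_ketBra_mul (u : ι → ℂ) (w : κ → ℂ) (Y : Matrix κ ι ℂ) :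
    (ketBra u w * Y).trace = vinner w (Y.mulVec u) := by
  rw [Matrix.trace_mul_comm, ketBra, Matrix.mul_vecMulVec, Matrix.trace_vecMulVec, vinner,
    dotProduct_comm]

lemma ketBra_conj (u : ι → ℂ) (w : κ → ℂ) : (ketBra u w)ᴴ = ketBra w u := by
  ext i j; simp [ketBra, vecMulVec_apply, mul_comm]

lemma ketBra_mulVec (u : ι → ℂ) (w x : κ → ℂ) :
    (ketBra u w).mulVec x = vinner w x • u := by
  ext i
  simp only [ketBra, vinner, mulVec, vecMulVec_apply, dotProduct, Pi.smul_apply, smul_eq_mul,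
    Finset.sum_mul]
  exact Finset.sum_congr rfl fun j _ => by ring

lemma vinner_smul' (c : ℂ) (v w : ι → ℂ) : vinner v (c • w) = c * vinner v w := by
  simp [vinner]

lemma trSum {N : Type*} [DecidableEq N] (s : Finset N) (u : N → ι → ℂ) (w : N → κ → ℂ)
    (hu : ∀ i ∈ s, ∀ j ∈ s, vinner (u i) (u j) = if i = j then 1 else 0)
    (hw : ∀ i ∈ s, ∀ j ∈ s, vinner (w i) (w j) = if i = j then 1 else 0) (a b : N → ℂ) :
    ((∑ i ∈ s, a i • ketBra (u i) (w i))ᴴ * (∑ i ∈ s, b i • ketBra (u i) (w i))).trace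
      = ∑ i ∈ s, star (a i) * b i := by
  rw [conjTranspose_sum, Matrix.sum_mul, trace_sum]
  refine Finset.sum_congr rfl fun i hi => ?_
  rw [Matrix.mul_sum, trace_sum, Finset.sum_eq_single_of_mem i hi]
  · rw [conjTranspose_smul, ketBra_conj, Matrix.smul_mul, Matrix.mul_smul, trace_smul, trace_smul, trace_ketBra_mul,
      ketBra_mulVec, vinner_smul', hu i hi i hi, hw i hi i hi]
    simp
  · intro j hj hij
    rw [conjTranspose_smul, ketBra_conj, Matrix.smul_mul, Matrix.mul_smul, trace_smul, trace_smul, trace_ketBra_mul,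
      ketBra_mulVec, vinner_smul', hu i hi j hj, hw j hj i hi]
    simp [hij]

lemma frob_sq (Y : Matrix ι κ ℂ) : ∑ i, ∑ j, Complex.normSq (Y i j) = ((Yᴴ * Y).trace).re := by
  rw [Finset.sum_comm]
  simp [trace, Matrix.mul_apply, Complex.normSq_apply]

lemma frob_sq' (Y : Matrix ι κ ℂ) (h : frobNorm Y ≤ 1) : ∑ i, ∑ j, ‖Y i j‖ ^ 2 ≤ 1 := by
  rw [frobNorm, sqrt_le_one_iff'] at h
  simpa [Complex.normSq_eq_norm_sq] using h

lemma rank_add_le' (A B : Matrix ι κ ℂ) : (A + B).rank ≤ A.rank + B.rank := by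
  unfold Matrix.rank
  refine le_trans (Submodule.finrank_mono ?_) (Submodule.finrank_add_le_finrank_add_finrank _ _)
  rintro _ ⟨x, rfl⟩
  rw [Matrix.mulVecLin_add, LinearMap.add_apply]
  exact Submodule.add_mem_sup ⟨x, rfl⟩ ⟨x, rfl⟩

lemma rank_sum_ketBra {N : Type*} [DecidableEq N] (s : Finset N) (u : N → ι → ℂ) (w : N → κ → ℂ)
    (c : N → ℂ) : (∑ i ∈ s, c i • ketBra (u i) (w i)).rank ≤ s.card := by
  induction s using Finset.induction_on with
  | empty => simp
  | insert a s ha ih =>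
    rw [Finset.sum_insert ha, Finset.card_insert_of_notMem ha]
    refine (rank_add_le' _ _).trans ?_
    have : (c a • ketBra (u a) (w a)).rank ≤ 1 := by
      rw [ketBra, ← Matrix.smul_vecMulVec]; exact Matrix.rank_vecMulVec_le _ _
    omega

lemma kNorm_bdd (k : ℕ) (X : Matrix ι κ ℂ) : BddAbove { r | ∃ Y : Matrix κ ι ℂ, Y.rank ≤ k ∧
    frobNorm Y ≤ 1 ∧ r = ‖(X * Y).trace‖ } := by
  refine ⟨∑ i, ∑ j, ‖X i j‖, ?_⟩
  rintro _ ⟨Y, -, hY, rfl⟩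
  have h := frob_sq' Y hY
  have h1 : ∀ i j, ‖Y i j‖ ≤ 1 := by
    intro i j
    have h2 : ‖Y i j‖ ^ 2 ≤ 1 := by
      refine le_trans ?_ h
      refine le_trans ?_ (Finset.single_le_sum (f := fun i => ∑ j, ‖Y i j‖ ^ 2)
        (fun i _ => by positivity) (Finset.mem_univ i))
      exact Finset.single_le_sum (f := fun j => ‖Y i j‖ ^ 2) (fun i _ => by positivity)
        (Finset.mem_univ j)
    exact (sq_le_one_iff₀ (norm_nonneg _)).1 h2
  simp only [trace, diag, Matrix.mul_apply]
  refine (norm_sum_le _ _).trans (Finset.sum_le_sum fun i _ => ?_)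
  refine (norm_sum_le _ _).trans (Finset.sum_le_sum fun j _ => ?_)
  rw [norm_mul]
  exact mul_le_of_le_one_right (norm_nonneg _) (h1 _ _)

lemma thresh {N : Type*} [DecidableEq N] (S T : Finset N) (hT : T ⊆ S) (a p : N → ℝ) (t c K : ℝ)
    (hK : (T.card : ℝ) = K) (ht : 0 ≤ t) (h1 : ∀ i ∈ T, t ≤ a i) (h2 : ∀ i ∈ S, i ∉ T → a i ≤ t)
    (hp0 : ∀ i ∈ S, 0 ≤ p i) (hp1 : ∀ i ∈ S, p i ≤ c) (hp : ∑ i ∈ S, p i ≤ K * c) :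
    ∑ i ∈ S, p i * a i ≤ c * ∑ i ∈ T, a i := by
  have e1 : ∀ f : N → ℝ, ∑ i ∈ S, f i = ∑ i ∈ S \ T, f i + ∑ i ∈ T, f i := fun f =>
    (Finset.sum_sdiff hT).symm
  have i1 : ∑ i ∈ S \ T, p i * a i ≤ ∑ i ∈ S \ T, p i * t := by
    refine Finset.sum_le_sum fun i hi => ?_
    rw [Finset.mem_sdiff] at hi
    exact mul_le_mul_of_nonneg_left (h2 i hi.1 hi.2) (hp0 i hi.1)
  have i2 : ∑ i ∈ T, p i * a i ≤ ∑ i ∈ T, (c * a i - c * t + p i * t) := by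
    refine Finset.sum_le_sum fun i hi => ?_
    nlinarith [mul_nonneg (sub_nonneg.2 (h1 i hi)) (sub_nonneg.2 (hp1 i (hT hi)))]
  rw [Finset.sum_add_distrib, Finset.sum_sub_distrib, ← Finset.mul_sum, ← Finset.sum_mul (f := p),
    Finset.sum_const, nsmul_eq_mul, hK] at i2
  rw [← Finset.sum_mul] at i1
  rw [e1] at hp ⊢
  nlinarith [mul_le_mul_of_nonneg_right hp ht]

lemma exists_top {N : Type*} [DecidableEq N] (a : N → ℝ) (ha : ∀ i, 0 ≤ a i) (S : Finset N)
    (K : ℕ) (hK : K ≤ S.card) (hK0 : 0 < K) :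
    ∃ T ⊆ S, T.card = K ∧ ∃ t, 0 ≤ t ∧ (∀ i ∈ T, t ≤ a i) ∧ ∀ i ∈ S, i ∉ T → a i ≤ t := by
  induction K with
  | zero => omega
  | succ K ih =>
    have key : ∃ T ⊆ S, T.card = K ∧ ∀ i ∈ T, ∀ j ∈ S, j ∉ T → a j ≤ a i := by
      rcases Nat.eq_zero_or_pos K with h | h
      · exact ⟨∅, by simp, by simp [h], by simp⟩
      · obtain ⟨T, h1, h2, t, -, h3, h4⟩ := ih (by omega) h
        exact ⟨T, h1, h2, fun i hi j hj hjT => (h4 j hj hjT).trans (h3 i hi)⟩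
    obtain ⟨T, h1, h2, h3⟩ := key
    have hne : (S \ T).Nonempty := by
      rw [← Finset.card_pos, Finset.card_sdiff_of_subset h1]; omega
    obtain ⟨x, hx, hmax⟩ := Finset.exists_max_image (S \ T) a hne
    rw [Finset.mem_sdiff] at hx
    refine ⟨insert x T, Finset.insert_subset hx.1 h1, by
      rw [Finset.card_insert_of_notMem hx.2, h2], a x, ha x, ?_, ?_⟩
    · intro i hi
      rcases Finset.mem_insert.1 hi with rfl | hi
      · exact le_rfl
      · exact h3 i hi x hx.1 hx.2
    · intro i hi hi'
      exact hmax i (Finset.mem_sdiff.2 ⟨hi, fun h => hi' (Finset.mem_insert_of_mem h)⟩)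

lemma exists_range_basis (Y : Matrix κ ι ℂ) : ∃ e : Fin Y.rank → κ → ℂ,
    (∀ a b, vinner (e a) (e b) = if a = b then 1 else 0) ∧
    ∀ x z, vinner z (Y.mulVec x) = ∑ a, vinner z (e a) * vinner (e a) (Y.mulVec x) := by
  classical
  let L : Submodule ℂ (EuclideanSpace ℂ κ) :=
    (LinearMap.range Y.mulVecLin).map (WithLp.linearEquiv 2 ℂ (κ → ℂ)).symm.toLinearMap
  have hL : Module.finrank ℂ L = Y.rank := by
    rw [Matrix.rank]
    exact LinearEquiv.finrank_map_eq _ _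
  let b := (stdOrthonormalBasis ℂ L).reindex (finCongr hL)
  refine ⟨fun a => WithLp.ofLp (b a : EuclideanSpace ℂ κ), ?_, ?_⟩
  · intro i j
    rw [vinner_eq_inner]
    have := orthonormal_iff_ite.1 b.orthonormal i j
    simpa using this
  · intro x z
    have hx : (WithLp.toLp 2 (Y.mulVec x) : EuclideanSpace ℂ κ) ∈ L :=
      ⟨Y.mulVec x, ⟨x, rfl⟩, rfl⟩
    have h := b.sum_repr' ⟨_, hx⟩
    have h' := congrArg (fun y : L => inner ℂ (WithLp.toLp 2 z : EuclideanSpace ℂ κ) (y : _)) h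
    simp only [vinner_eq_inner]
    simp only [Submodule.coe_sum, inner_sum, Submodule.coe_smul, inner_smul_right,
      Submodule.coe_inner] at h'
    rw [← h']
    exact Finset.sum_congr rfl fun a _ => by simp [mul_comm]

lemma kNorm_le {k q : ℕ} (hk1 : 1 ≤ k) (hkq : k ≤ q) (τ : ℕ → ℝ) (u : ℕ → ι → ℂ) (w : ℕ → κ → ℂ)
    (hτ0 : ∀ i, i < q → 0 ≤ τ i) (hτ : ∀ i j, i ≤ j → j < q → τ j ≤ τ i)
    (hu : ∀ i ∈ Finset.range q, ∀ j ∈ Finset.range q, vinner (u i) (u j) = if i = j then 1 else 0)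
    (hw : ∀ i ∈ Finset.range q, ∀ j ∈ Finset.range q, vinner (w i) (w j) = if i = j then 1 else 0)
    (hs : ∑ i ∈ Finset.range k, τ i ^ 2 ≤ 1) :
    kNorm k (∑ i ∈ Finset.range q, (τ i : ℂ) • ketBra (u i) (w i)) ≤ 1 := by
  refine Real.sSup_le ?_ zero_le_one
  rintro _ ⟨Y, hr, hY, rfl⟩
  obtain ⟨e, he, hexp⟩ := exists_range_basis Y
  have hY' := frob_sq' Y hY
  have htr : ((∑ i ∈ Finset.range q, (τ i : ℂ) • ketBra (u i) (w i)) * Y).trace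
      = ∑ i ∈ Finset.range q, ∑ a, (τ i * vinner (w i) (e a)) * vinner (e a) (Y.mulVec (u i)) := by
    rw [Matrix.sum_mul, trace_sum]
    refine Finset.sum_congr rfl fun i _ => ?_
    rw [Matrix.smul_mul, trace_smul, trace_ketBra_mul, hexp, smul_eq_mul, Finset.mul_sum]
    exact Finset.sum_congr rfl fun a _ => by ring
  have hA : ∑ i ∈ Finset.range q, ∑ a, ‖(τ i : ℂ) * vinner (w i) (e a)‖ ^ 2 ≤ 1 := by
    have e1 : ∀ i, ∑ a, ‖(τ i : ℂ) * vinner (w i) (e a)‖ ^ 2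
        = (∑ a, ‖vinner (w i) (e a)‖ ^ 2) * τ i ^ 2 := by
      intro i
      rw [Finset.sum_mul]
      refine Finset.sum_congr rfl fun a _ => ?_
      rw [norm_mul, mul_pow, Complex.norm_real, Real.norm_eq_abs, sq_abs, mul_comm]
    simp only [e1]
    have hunit : ∀ (v : κ → ℂ), vinner v v = 1 → ∑ j, ‖v j‖ ^ 2 = 1 := by
      intro v hv
      rw [vinner_eq_inner, inner_self_eq_norm_sq_to_K] at hv
      have : (‖(WithLp.toLp 2 v : EuclideanSpace ℂ κ)‖ ^ 2 : ℝ) = 1 := by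
        have h := congrArg Complex.re hv
        rw [← RCLike.ofReal_pow] at h
        exact h
      rwa [EuclideanSpace.norm_sq_eq] at this
    have := thresh (Finset.range q) (Finset.range k) (Finset.range_mono hkq)
      (fun i => τ i ^ 2) (fun i => ∑ a, ‖vinner (w i) (e a)‖ ^ 2) (τ (k-1) ^ 2) 1 k (by simp)
      (by positivity) ?_ ?_ (fun i _ => by positivity) ?_ ?_
    · linarith
    · intro i hi
      rw [Finset.mem_range] at hi
      exact pow_le_pow_left₀ (hτ0 _ (by omega)) (hτ _ _ (by omega) (by omega)) 2
    · intro i hi hi'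
      rw [Finset.mem_range] at hi hi'
      exact pow_le_pow_left₀ (hτ0 _ (by omega)) (hτ _ _ (by omega) (by omega)) 2
    · intro i hi
      have h := bessel Finset.univ e (fun i _ j _ => he i j) (w i)
      rw [hunit (w i) (by simpa using hw i hi i hi)] at h
      refine le_trans (le_of_eq ?_) h
      refine Finset.sum_congr rfl fun a _ => ?_
      rw [← vinner_conj, norm_star]
    · rw [Finset.sum_comm, mul_one]
      calc _ ≤ ∑ a : Fin Y.rank, (1 : ℝ) := by
            refine Finset.sum_le_sum fun a _ => ?_
            refine (bessel _ w hw (e a)).trans ?_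
            rw [hunit (e a) (by simpa using he a a)]
        _ ≤ k := by simpa using hr
  have hB : ∑ i ∈ Finset.range q, ∑ a, ‖vinner (e a) (Y.mulVec (u i))‖ ^ 2 ≤ 1 := by
    calc _ ≤ ∑ i ∈ Finset.range q, ∑ j, ‖(Y.mulVec (u i)) j‖ ^ 2 :=
          Finset.sum_le_sum fun i _ => bessel Finset.univ e (fun i _ j _ => he i j) _
      _ = ∑ j, ∑ i ∈ Finset.range q, ‖(Y.mulVec (u i)) j‖ ^ 2 := Finset.sum_comm
      _ ≤ ∑ j, ∑ l, ‖Y j l‖ ^ 2 := by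
          refine Finset.sum_le_sum fun j _ => ?_
          have := bessel _ u hu (star (Y j))
          simp only [Pi.star_apply, norm_star] at this
          refine le_trans (le_of_eq ?_) this
          refine Finset.sum_congr rfl fun i _ => ?_
          rw [← vinner_conj, norm_star]
          simp [vinner, mulVec]
      _ ≤ 1 := hY'
  rw [htr]
  rw [← Finset.sum_product'] at hA hB ⊢
  have hcs := Finset.sum_mul_sq_le_sq_mul_sq (Finset.range q ×ˢ (Finset.univ : Finset (Fin Y.rank)))
    (fun x => ‖(τ x.1 : ℂ) * vinner (w x.1) (e x.2)‖) (fun x => ‖vinner (e x.2) (Y.mulVec (u x.1))‖)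
  refine (norm_sum_le _ _).trans ?_
  simp only [norm_mul] at hcs hA ⊢
  have h3 := mul_le_one₀ hA (Finset.sum_nonneg fun i _ => by positivity) hB
  exact (sq_le_one_iff₀ (Finset.sum_nonneg fun i _ => by positivity)).1 (hcs.trans h3)

lemma subset_bound {N : Type*} [DecidableEq N] (k : ℕ) (W : Matrix ι κ ℂ) (hW : kNorm k W ≤ 1)
    (s : Finset N) (hs : s.card ≤ k) (u : N → ι → ℂ) (w : N → κ → ℂ)
    (hu : ∀ i ∈ s, ∀ j ∈ s, vinner (u i) (u j) = if i = j then 1 else 0)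
    (hw : ∀ i ∈ s, ∀ j ∈ s, vinner (w i) (w j) = if i = j then 1 else 0) :
    ∑ i ∈ s, ‖vinner (u i) (W.mulVec (w i))‖ ^ 2 ≤ 1 := by
  set z : N → ℂ := fun i => vinner (u i) (W.mulVec (w i)) with hz
  set A : ℝ := ∑ i ∈ s, ‖z i‖ ^ 2 with hA
  have hA0 : 0 ≤ A := Finset.sum_nonneg fun i _ => by positivity
  let c : N → ℂ := fun i => star (z i) / (Real.sqrt A : ℂ)
  let Y : Matrix κ ι ℂ := ∑ i ∈ s, c i • ketBra (w i) (u i)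
  have hsA : (Real.sqrt A) ^ 2 = A := Real.sq_sqrt hA0
  have hF : frobNorm Y ≤ 1 := by
    rw [frobNorm, sqrt_le_one_iff', frob_sq, trSum s w u hw hu, Complex.re_sum]
    have : ∀ i ∈ s, (star (c i) * c i).re = ‖z i‖ ^ 2 / A := by
      intro i _
      have : star (c i) * c i = ((‖c i‖ ^ 2 : ℝ) : ℂ) := by
        rw [Complex.star_def, Complex.conj_mul']; push_cast; rfl
      rw [this, Complex.ofReal_re, norm_div, norm_star, div_pow, Complex.norm_real,
        Real.norm_eq_abs, sq_abs, hsA]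
    rw [Finset.sum_congr rfl this, ← Finset.sum_div, ← hA]
    exact div_self_le_one A
  have hT : (W * Y).trace = (Real.sqrt A : ℂ) := by
    rw [Matrix.trace_mul_comm, show Y = ∑ i ∈ s, c i • ketBra (w i) (u i) from rfl, Matrix.sum_mul, trace_sum]
    have : ∀ i ∈ s, (c i • ketBra (w i) (u i) * W).trace = ((‖z i‖ ^ 2 / Real.sqrt A : ℝ) : ℂ) := by
      intro i _
      rw [Matrix.smul_mul, trace_smul, trace_ketBra_mul, smul_eq_mul]
      change star (z i) / _ * z i = _
      rw [div_mul_eq_mul_div, Complex.star_def, Complex.conj_mul']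
      push_cast; rfl
    rw [Finset.sum_congr rfl this, ← Complex.ofReal_sum, ← Finset.sum_div, ← hA, Real.div_sqrt]
  have h1 : ‖(W * Y).trace‖ ≤ kNorm k W :=
    le_csSup (kNorm_bdd k W) ⟨Y, (rank_sum_ketBra s w u c).trans hs, hF, rfl⟩
  rw [hT, Complex.norm_real, Real.norm_of_nonneg (Real.sqrt_nonneg _)] at h1
  exact sqrt_le_one_iff'.1 (h1.trans hW)

/-- the value of the dual of the (k,2)-norm on a matrix `X ∈ M_{n,m}(ℂ)` with
singular values `σ 0 ≥ σ 1 ≥ ⋯ ≥ σ (min m n - 1) ≥ 0` (presented via a singular value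
decomposition of `X`; here the 0-based `σ i` is the paper's `σ_{i+1}`). `r` is the largest
index with `1 ≤ r < k` such that `σ_r > (Σ_{i=r+1}^{min(m,n)} σ_i)/(k-r)` (and `r = 0` if no
such index exists or `k = 1`). -/
theorem dual_k2_norm_eq {n m : ℕ} (X : Matrix (Fin n) (Fin m) ℂ) (k : ℕ)
    (hk1 : 1 ≤ k) (hk : k ≤ min m n)
    (σ : ℕ → ℝ) (u : ℕ → Fin n → ℂ) (w : ℕ → Fin m → ℂ)
    (hσ0 : ∀ i, i < min m n → 0 ≤ σ i)
    (hσmono : ∀ i j, i ≤ j → j < min m n → σ j ≤ σ i)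
    (hu : ∀ i j, i < min m n → j < min m n → vinner (u i) (u j) = if i = j then 1 else 0)
    (hw : ∀ i j, i < min m n → j < min m n → vinner (w i) (w j) = if i = j then 1 else 0)
    (hX : X = ∑ i ∈ Finset.range (min m n), σ i • ketBra (u i) (w i))
    (r : ℕ) (hrk : r < k)
    (hr : 1 ≤ r → (∑ i ∈ Finset.Ico r (min m n), σ i) / ((k : ℝ) - r) < σ (r - 1))
    (hrmax : ∀ j, r < j → j < k →
      ¬ ((∑ i ∈ Finset.Ico j (min m n), σ i) / ((k : ℝ) - j) < σ (j - 1))) :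
    dualNormM (kNorm k) X =
      Real.sqrt ((∑ i ∈ Finset.range r, σ i ^ 2) +
        ((k : ℝ) - r) * ((∑ i ∈ Finset.Ico r (min m n), σ i) / ((k : ℝ) - r)) ^ 2) := by
  have hku := hk
  set q := min m n with hq
  have hu' : ∀ i ∈ Finset.range q, ∀ j ∈ Finset.range q,
      vinner (u i) (u j) = if i = j then 1 else 0 := fun i hi j hj =>
    hu i j (Finset.mem_range.1 hi) (Finset.mem_range.1 hj)
  have hw' : ∀ i ∈ Finset.range q, ∀ j ∈ Finset.range q,
      vinner (w i) (w j) = if i = j then 1 else 0 := fun i hi j hj =>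
    hw i j (Finset.mem_range.1 hi) (Finset.mem_range.1 hj)
  have hkr : (0 : ℝ) < (k : ℝ) - r := by
    have : (r : ℝ) < k := by exact_mod_cast hrk
    linarith
  set s : ℝ := (∑ i ∈ Finset.Ico r q, σ i) / ((k : ℝ) - r) with hs
  have hsum : ∑ i ∈ Finset.Ico r q, σ i = ((k : ℝ) - r) * s := by
    rw [hs]; field_simp
  have hs0 : 0 ≤ s := div_nonneg (Finset.sum_nonneg fun i hi => hσ0 i (Finset.mem_Ico.1 hi).2) hkr.le
  have hsplit : ∑ i ∈ Finset.Ico r q, σ i = σ r + ∑ i ∈ Finset.Ico (r+1) q, σ i :=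
    Finset.sum_eq_sum_Ico_succ_bot (by omega) _
  have hσr : σ r ≤ s := by
    rw [hs, le_div_iff₀ hkr, hsplit]
    rcases Nat.lt_or_ge (r + 1) k with h | h
    · have h1 := hrmax (r + 1) (by omega) h
      have h2 : (0 : ℝ) < (k : ℝ) - (r + 1 : ℕ) := by
        have : ((r + 1 : ℕ) : ℝ) < k := by exact_mod_cast h
        linarith
      rw [not_lt, Nat.add_sub_cancel, le_div_iff₀ h2] at h1
      push_cast at h1
      linarith
    · have h3 : k = r + 1 := by omega
      have : 0 ≤ ∑ i ∈ Finset.Ico (r+1) q, σ i :=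
        Finset.sum_nonneg fun i hi => hσ0 i (Finset.mem_Ico.1 hi).2
      rw [h3]; push_cast; linarith
  have hσs : ∀ i ∈ Finset.Ico r q, σ i ≤ s := fun i hi =>
    (hσmono r i (Finset.mem_Ico.1 hi).1 (Finset.mem_Ico.1 hi).2).trans hσr
  set D : ℝ := (∑ i ∈ Finset.range r, σ i ^ 2) + ((k : ℝ) - r) * s ^ 2 with hD
  have hD0 : 0 ≤ D := add_nonneg (Finset.sum_nonneg fun i _ => by positivity) (by positivity)
  have hsD : Real.sqrt D ^ 2 = D := Real.sq_sqrt hD0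
  have hX' : X = ∑ i ∈ Finset.range q, (σ i : ℂ) • ketBra (u i) (w i) := by
    rw [hX]
    refine Finset.sum_congr rfl fun i _ => ?_
    ext a b; simp
  let τ : ℕ → ℝ := fun i => if i < r then σ i else s
  have hτ1 : ∀ i, i < r → τ i = σ i := fun i hi => if_pos hi
  have hτ2 : ∀ i, r ≤ i → τ i = s := fun i hi => if_neg (by omega)
  have hτ0 : ∀ i, i < q → 0 ≤ τ i := by
    intro i hi
    rcases Nat.lt_or_ge i r with h | h
    · rw [hτ1 i h]; exact hσ0 i hi
    · rw [hτ2 i h]; exact hs0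
  have hτm : ∀ i j, i ≤ j → j < q → τ j ≤ τ i := by
    intro i j hij hj
    rcases Nat.lt_or_ge j r with h | h
    · rw [hτ1 j h, hτ1 i (by omega)]; exact hσmono i j hij hj
    · rw [hτ2 j h]
      rcases Nat.lt_or_ge i r with h' | h'
      · rw [hτ1 i h']
        exact (hr (by omega)).le.trans (hσmono i (r-1) (by omega) (by omega))
      · rw [hτ2 i h']
  have hrr : ∀ f : ℕ → ℝ, ∀ N, r ≤ N → ∑ i ∈ Finset.range N, f i
      = ∑ i ∈ Finset.range r, f i + ∑ i ∈ Finset.Ico r N, f i := fun f N h =>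
    (Finset.sum_range_add_sum_Ico f h).symm
  have hub : ∀ x ∈ { r | ∃ W : Matrix (Fin n) (Fin m) ℂ, kNorm k W ≤ 1 ∧
      r = ‖(Wᴴ * X).trace‖ }, x ≤ Real.sqrt D := by
    rintro _ ⟨W, hW, rfl⟩
    set a : ℕ → ℝ := fun i => ‖vinner (u i) (W.mulVec (w i))‖ with ha
    have ha0 : ∀ i, 0 ≤ a i := fun i => norm_nonneg _
    have htr : ‖(Wᴴ * X).trace‖ ≤ ∑ i ∈ Finset.range q, σ i * a i := by
      rw [Matrix.trace_mul_comm, hX', Matrix.sum_mul, trace_sum]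
      refine (norm_sum_le _ _).trans (Finset.sum_le_sum fun i hi => ?_)
      rw [Matrix.smul_mul, trace_smul, trace_ketBra_mul, norm_smul, Complex.norm_real,
        Real.norm_of_nonneg (hσ0 i (Finset.mem_range.1 hi))]
      have : vinner (w i) (Wᴴ.mulVec (u i)) = star (vinner (u i) (W.mulVec (w i))) := by
        rw [vinner_conj, vinner, vinner, star_mulVec, dotProduct_mulVec]
      rw [this, norm_star]
    obtain ⟨T, hTS, hTc, t, ht0, ht1, ht2⟩ := exists_top a ha0 (Finset.Ico r q) (k - r)
      (by rw [Nat.card_Ico]; omega) (by omega)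
    have hc : (T.card : ℝ) = (k : ℝ) - r := by rw [hTc, Nat.cast_sub hrk.le]
    have h1 := thresh (Finset.Ico r q) T hTS a σ t s ((k : ℝ) - r) hc ht0 ht1 ht2
      (fun i hi => hσ0 i (Finset.mem_Ico.1 hi).2) hσs hsum.le
    have hdisj : Disjoint (Finset.range r) T := by
      rw [Finset.disjoint_left]
      intro i hi hiT
      have := Finset.mem_Ico.1 (hTS hiT)
      rw [Finset.mem_range] at hi
      omega
    have hTr : ∀ i ∈ T, τ i = s := fun i hi => hτ2 i (Finset.mem_Ico.1 (hTS hi)).1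
    have hsub : Finset.range r ∪ T ⊆ Finset.range q := by
      refine Finset.union_subset (Finset.range_mono (by omega)) fun i hi => ?_
      exact Finset.mem_range.2 (Finset.mem_Ico.1 (hTS hi)).2
    have hb := subset_bound k W hW (Finset.range r ∪ T)
      (by rw [Finset.card_union_of_disjoint hdisj, hTc, Finset.card_range]; omega) u w
      (fun i hi j hj => hu' i (hsub hi) j (hsub hj)) (fun i hi j hj => hw' i (hsub hi) j (hsub hj))
    have e1 : ∑ i ∈ Finset.range r ∪ T, τ i * a i
        = ∑ i ∈ Finset.range r, σ i * a i + s * ∑ i ∈ T, a i := by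
      rw [Finset.sum_union hdisj, Finset.mul_sum]
      congr 1
      · exact Finset.sum_congr rfl fun i hi => by rw [hτ1 i (Finset.mem_range.1 hi)]
      · exact Finset.sum_congr rfl fun i hi => by rw [hTr i hi]
    have e2 : ∑ i ∈ Finset.range r ∪ T, τ i ^ 2 = D := by
      rw [Finset.sum_union hdisj, hD]
      congr 1
      · exact Finset.sum_congr rfl fun i hi => by rw [hτ1 i (Finset.mem_range.1 hi)]
      · rw [Finset.sum_congr rfl fun i hi => by rw [hTr i hi], Finset.sum_const, nsmul_eq_mul, hc]
    have hcs := Finset.sum_mul_sq_le_sq_mul_sq (Finset.range r ∪ T) τ a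
    rw [e2] at hcs
    refine Real.le_sqrt_of_sq_le ?_
    have h2 : ‖(Wᴴ * X).trace‖ ≤ ∑ i ∈ Finset.range r ∪ T, τ i * a i := by
      rw [e1]
      rw [hrr _ q (by omega)] at htr
      linarith
    calc _ ≤ _ := pow_le_pow_left₀ (norm_nonneg _) h2 2
      _ ≤ _ := hcs
      _ ≤ D := mul_le_of_le_one_right hD0 hb
  apply le_antisymm
  · exact Real.sSup_le hub (Real.sqrt_nonneg _)
  · have hbdd := (⟨_, hub⟩ : BddAbove _)
    refine le_csSup hbdd ⟨∑ i ∈ Finset.range q, ((τ i / Real.sqrt D : ℝ) : ℂ) • ketBra (u i) (w i),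
      ?_, ?_⟩
    · refine kNorm_le hk1 hk (fun i => τ i / Real.sqrt D) u w ?_ ?_ hu' hw' ?_
      · exact fun i hi => div_nonneg (hτ0 i hi) (Real.sqrt_nonneg _)
      · exact fun i j hij hj => div_le_div_of_nonneg_right (hτm i j hij hj) (Real.sqrt_nonneg _)
      · simp only [div_pow, hsD]
        rw [← Finset.sum_div]
        have : ∑ i ∈ Finset.range k, τ i ^ 2 = D := by
          rw [hrr _ k hrk.le, hD]
          congr 1
          · exact Finset.sum_congr rfl fun i hi => by rw [hτ1 i (Finset.mem_range.1 hi)]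
          · rw [Finset.sum_congr rfl fun i hi => by rw [hτ2 i (Finset.mem_Ico.1 hi).1],
              Finset.sum_const, nsmul_eq_mul, Nat.card_Ico, Nat.cast_sub hrk.le]
        rw [this]
        exact div_self_le_one D
    · rw [hX', trSum _ u w hu' hw']
      have : ∑ i ∈ Finset.range q, star ((τ i / Real.sqrt D : ℝ) : ℂ) * (σ i : ℂ)
          = ((∑ i ∈ Finset.range q, τ i * σ i) / Real.sqrt D : ℝ) := by
        rw [Finset.sum_div, Complex.ofReal_sum]
        refine Finset.sum_congr rfl fun i _ => ?_
        rw [Complex.star_def, Complex.conj_ofReal]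
        push_cast; ring
      rw [this]
      have e3 : ∑ i ∈ Finset.range q, τ i * σ i = D := by
        rw [hrr _ q (by omega), hD]
        congr 1
        · exact Finset.sum_congr rfl fun i hi => by rw [hτ1 i (Finset.mem_range.1 hi)]; ring
        · rw [Finset.sum_congr rfl fun i hi => by rw [hτ2 i (Finset.mem_Ico.1 hi).1],
            ← Finset.mul_sum, hsum]; ring
      rw [e3, Real.div_sqrt, Complex.norm_real, Real.norm_of_nonneg (Real.sqrt_nonneg _)]

end Ent
end

section
/- Let ρ ∈ M_m ⊗ M_n be a density matrix and fix 1 ≤ k ≤ min(m,n). Then the following are equivalent: (a) SN(ρ) ≤ k; (b) ‖ρ‖_{γ,k} = 1; (c) R_k(ρ) = 1. -/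
open scoped Kronecker ComplexOrder
open Matrix

namespace Ent

variable {ι κ : Type*} [Fintype ι] [Fintype κ]

theorem isCompact_hull_aux {E : Type*} [AddCommGroup E] [Module ℝ E] [TopologicalSpace E]
    [IsTopologicalAddGroup E] [ContinuousSMul ℝ E] [FiniteDimensional ℝ E]
    {s : Set E} (hs : IsCompact s) : IsCompact (convexHull ℝ s) := by
  rcases s.eq_empty_or_nonempty with rfl | ⟨z0, hz0⟩
  · simp
  have key : convexHull ℝ s = (fun p : (Fin (Module.finrank ℝ E + 1) → ℝ) ×
      (Fin (Module.finrank ℝ E + 1) → E) => ∑ i, p.1 i • p.2 i) ''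
      (stdSimplex ℝ (Fin (Module.finrank ℝ E + 1)) ×ˢ Set.pi Set.univ (fun _ => s)) := by
    apply Set.Subset.antisymm
    · intro x hx
      obtain ⟨ι, _, z, w, hz, hai, hw, hw1, hx⟩ := eq_pos_convex_span_of_mem_convexHull hx
      have hcard : Fintype.card ι ≤ Fintype.card (Fin (Module.finrank ℝ E + 1)) := by
        simpa using hai.card_le_finrank_succ.trans
          (Nat.add_le_add_right (Submodule.finrank_le _) 1)
      obtain ⟨e⟩ := Function.Embedding.nonempty_of_card_le hcard
      refine ⟨(Function.extend e w 0, Function.extend e z (fun _ => z0)), ⟨⟨?_, ?_⟩, ?_⟩, ?_⟩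
      · intro i
        by_cases h : ∃ a, e a = i
        · obtain ⟨a, rfl⟩ := h
          simpa [e.injective.extend_apply] using (hw a).le
        · simp [Function.extend_apply' _ _ _ h]
      · rw [← hw1]
        symm
        apply Fintype.sum_of_injective e e.injective
        · intro i hi
          exact Function.extend_apply' _ _ _ hi
        · intro i
          simp [e.injective.extend_apply]
      · intro i _
        by_cases h : ∃ a, e a = i
        · obtain ⟨a, rfl⟩ := h
          simpa [e.injective.extend_apply] using hz ⟨a, rfl⟩
        · simpa [Function.extend_apply' _ _ _ h] using hz0
      · rw [← hx]
        symm
        apply Fintype.sum_of_injective e e.injective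
        · intro i hi
          simp [Function.extend_apply' _ _ _ hi]
        · intro i
          simp [e.injective.extend_apply]
    · rintro _ ⟨⟨w, z⟩, ⟨⟨hw0, hw1⟩, hz⟩, rfl⟩
      exact mem_convexHull_of_exists_fintype w z hw0 hw1 (fun i => hz i trivial) rfl
  rw [key]
  refine ((isCompact_stdSimplex ℝ _).prod (isCompact_univ_pi fun _ => hs)).image ?_
  fun_prop

theorem schmidtRankLE_iff (k : ℕ) (v : ι × κ → ℂ) :
    SchmidtRankLE k v ↔ ∀ f : Fin (k + 1) → ι,
      ¬ LinearIndependent ℂ (fun j => fun y : κ => v (f j, y)) := by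
  constructor
  · rintro ⟨a, b, rfl⟩ f hli
    have h1 : Submodule.span ℂ (Set.range (fun j => fun y : κ =>
        (∑ i, prodVec (a i) (b i)) (f j, y))) ≤ Submodule.span ℂ (Set.range b) := by
      rw [Submodule.span_le]
      rintro _ ⟨j, rfl⟩
      have : (fun y : κ => (∑ i, prodVec (a i) (b i)) (f j, y)) = ∑ i, a i (f j) • b i := by
        ext y
        simp [prodVec, Finset.sum_apply]
      simp only [this]
      exact Submodule.sum_mem _ fun i _ =>
        Submodule.smul_mem _ _ (Submodule.subset_span ⟨i, rfl⟩)
    have h2 := Submodule.finrank_mono h1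
    rw [finrank_span_eq_card hli] at h2
    have h3 := finrank_range_le_card (R := ℂ) b
    rw [Set.finrank] at h3
    simp at h2 h3
    omega
  · intro h
    obtain ⟨t, a, ha, hsp, hli⟩ := exists_linearIndependent' ℂ (fun i => fun y : κ => v (i, y))
    have : Finite t := Finite.of_injective a ha
    have := Fintype.ofFinite t
    have hcard : Fintype.card t ≤ Fintype.card (Fin k) := by
      by_contra hc
      obtain ⟨e⟩ := Function.Embedding.nonempty_of_card_le
        (α := Fin (k+1)) (β := t) (by simp at hc ⊢; omega)
      exact h (a ∘ e) (hli.comp e e.injective)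
    obtain ⟨e⟩ := Function.Embedding.nonempty_of_card_le hcard
    set b : Fin k → κ → ℂ := Function.extend e ((fun i => fun y : κ => v (i, y)) ∘ a) 0 with hb
    have hsub : ∀ i, (fun y : κ => v (i, y)) ∈ Submodule.span ℂ (Set.range b) := by
      intro i
      have h1 : (fun y : κ => v (i, y)) ∈
          Submodule.span ℂ (Set.range fun i => fun y : κ => v (i, y)) :=
        Submodule.subset_span ⟨i, rfl⟩
      rw [← hsp] at h1
      refine Submodule.span_mono ?_ h1
      rintro _ ⟨j, rfl⟩
      exact ⟨e j, by rw [hb, e.injective.extend_apply]⟩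
    simp only [Submodule.mem_span_range_iff_exists_fun] at hsub
    choose c hc using hsub
    refine ⟨fun j i => c i j, b, ?_⟩
    ext ⟨i, y⟩
    have := congrFun (hc i) y
    simp only [Finset.sum_apply, Pi.smul_apply, smul_eq_mul] at this
    simp [prodVec, Finset.sum_apply, this]

theorem isClosed_schmidtRankLE (k : ℕ) : IsClosed {v : ι × κ → ℂ | SchmidtRankLE k v} := by
  simp only [schmidtRankLE_iff, Set.ofPred_forall]
  refine isClosed_iInter fun f => ?_
  rw [← isOpen_compl_iff]
  have h : IsOpen {g : Fin (k+1) → κ → ℂ | LinearIndependent ℂ g} :=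
    isOpen_setOfPred_linearIndependent
  have h2 := h.preimage (f := fun (v : ι × κ → ℂ) => fun j => fun y : κ => v (f j, y))
    (by fun_prop)
  convert h2 using 1
  ext v
  simp

theorem vinner_self_eq (v : ι → ℂ) : vinner v v = ((∑ i, ‖v i‖ ^ 2 : ℝ) : ℂ) := by
  simp [vinner, dotProduct, Complex.conj_mul']

/-- unit vectors of Schmidt rank at most k -/
def USet (ι κ : Type*) [Fintype ι] [Fintype κ] (k : ℕ) : Set (ι × κ → ℂ) :=
  {v | vinner v v = 1 ∧ SchmidtRankLE k v}

theorem isCompact_USet (k : ℕ) : IsCompact (USet ι κ k) := by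
  refine Metric.isCompact_of_isClosed_isBounded ?_ ?_
  · refine IsClosed.inter ?_ (isClosed_schmidtRankLE k)
    refine isClosed_eq ?_ continuous_const
    unfold vinner dotProduct
    simp only [Pi.star_apply]
    fun_prop
  · refine (Metric.isBounded_closedBall (x := (0 : ι × κ → ℂ)) (r := 1)).subset ?_
    rintro v ⟨hv, -⟩
    rw [mem_closedBall_zero_iff, pi_norm_le_iff_of_nonneg zero_le_one]
    intro i
    rw [vinner_self_eq] at hv
    have h1 : ∑ i, ‖v i‖ ^ 2 = 1 := by exact_mod_cast hv
    have h2 := Finset.single_le_sum (f := fun i => ‖v i‖ ^ 2) (fun i _ => sq_nonneg _)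
      (Finset.mem_univ i)
    simp only [h1] at h2
    nlinarith [norm_nonneg (v i)]

/-- the generating set of the unit ball -/
def KSet (ι κ : Type*) [Fintype ι] [Fintype κ] (k : ℕ) : Set (Matrix (ι × κ) (ι × κ) ℂ) :=
  (fun p : (ι × κ → ℂ) × (ι × κ → ℂ) => ketBra p.1 p.2) '' (USet ι κ k ×ˢ USet ι κ k)

theorem isCompact_KSet (k : ℕ) : IsCompact (KSet ι κ k) := by
  refine ((isCompact_USet k).prod (isCompact_USet k)).image ?_
  unfold ketBra
  fun_prop

theorem SchmidtRankLE.smul {k : ℕ} {v : ι × κ → ℂ} (h : SchmidtRankLE k v) (c : ℂ) :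
    SchmidtRankLE k (c • v) := by
  obtain ⟨a, b, rfl⟩ := h
  refine ⟨fun i => c • a i, b, ?_⟩
  ext p
  simp [prodVec, Finset.sum_apply, Finset.mul_sum, mul_assoc]

theorem USet.smul {k : ℕ} {v : ι × κ → ℂ} (h : v ∈ USet ι κ k) {c : ℂ} (hc : ‖c‖ = 1) :
    c • v ∈ USet ι κ k := by
  refine ⟨?_, h.2.smul c⟩
  have := h.1
  rw [vinner_self_eq] at this ⊢
  simpa [norm_smul, hc] using this

theorem KSet.smul {k : ℕ} {X : Matrix (ι × κ) (ι × κ) ℂ} (h : X ∈ KSet ι κ k) {c : ℂ}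
    (hc : ‖c‖ = 1) : c • X ∈ KSet ι κ k := by
  obtain ⟨⟨v, w⟩, ⟨hv, hw⟩, rfl⟩ := h
  refine ⟨(c • v, w), ⟨USet.smul hv hc, hw⟩, ?_⟩
  simp [ketBra]

theorem trace_ketBra_re {v w : ι → ℂ} (hv : vinner v v = 1) (hw : vinner w w = 1) :
    (ketBra v w).trace.re = 1 - (∑ i, ‖v i - w i‖ ^ 2) / 2 := by
  rw [vinner_self_eq] at hv hw
  have h1 : ∑ i, ‖v i‖ ^ 2 = 1 := by exact_mod_cast hv
  have h2 : ∑ i, ‖w i‖ ^ 2 = 1 := by exact_mod_cast hw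
  have h3 : ∀ i, ‖v i - w i‖ ^ 2 = ‖v i‖ ^ 2 + ‖w i‖ ^ 2 - 2 * (v i * star (w i)).re := by
    intro i
    simp only [← Complex.normSq_eq_norm_sq, Complex.normSq_apply]
    simp
    ring
  simp only [h3, Finset.sum_sub_distrib, Finset.sum_add_distrib, h1, h2, ← Finset.mul_sum]
  simp [ketBra, Matrix.trace, Matrix.vecMulVec_apply]
  ring

theorem re_trace_le {k : ℕ} {X : Matrix (ι × κ) (ι × κ) ℂ} (h : X ∈ convexHull ℝ (KSet ι κ k)) :
    X.trace.re ≤ 1 := by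
  obtain ⟨I, _, p, z, hp, hp1, hz, rfl⟩ := mem_convexHull_iff_exists_fintype.1 h
  simp only [Matrix.trace_sum, Matrix.trace_smul, Complex.re_sum, Complex.smul_re, smul_eq_mul]
  rw [← hp1]
  refine Finset.sum_le_sum fun i _ => ?_
  obtain ⟨⟨v, w⟩, ⟨hv, hw⟩, h⟩ := hz i
  have := trace_ketBra_re hv.1 hw.1
  simp only at h
  rw [h] at this
  have h4 : 0 ≤ (∑ i, ‖v i - w i‖ ^ 2) := Finset.sum_nonneg fun i _ => sq_nonneg _
  have := hp i
  nlinarith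

theorem schmidtNumLE_of_mem {k : ℕ} {X : Matrix (ι × κ) (ι × κ) ℂ}
    (h : X ∈ convexHull ℝ (KSet ι κ k)) (ht : X.trace = 1) : SchmidtNumLE k X := by
  obtain ⟨I, _, p, z, hp, hp1, hz, rfl⟩ := mem_convexHull_iff_exists_fintype.1 h
  have ht' := congrArg Complex.re ht
  simp only [Matrix.trace_sum, Matrix.trace_smul, Complex.re_sum, Complex.smul_re, smul_eq_mul,
    Complex.one_re] at ht'
  choose vw hvw hz using hz
  have htr : ∀ i, (z i).trace.re = 1 - (∑ j, ‖(vw i).1 j - (vw i).2 j‖ ^ 2) / 2 := by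
    intro i
    rw [← hz i]
    exact trace_ketBra_re (hvw i).1.1 (hvw i).2.1
  have hnn : ∀ i, 0 ≤ ∑ j, ‖(vw i).1 j - (vw i).2 j‖ ^ 2 :=
    fun i => Finset.sum_nonneg fun j _ => sq_nonneg _
  have hsum : ∑ i, p i * (∑ j, ‖(vw i).1 j - (vw i).2 j‖ ^ 2) = 0 := by
    have : ∀ i, p i * (∑ j, ‖(vw i).1 j - (vw i).2 j‖ ^ 2) =
        2 * (p i - p i * (z i).trace.re) := by
      intro i; rw [htr]; ring
    simp only [this, ← Finset.mul_sum, Finset.sum_sub_distrib, ht', hp1]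
    norm_num
  have heq : ∀ i, p i • z i = p i • ketBra (vw i).1 (vw i).1 := by
    intro i
    have h0 := (Finset.sum_eq_zero_iff_of_nonneg
      (fun i _ => mul_nonneg (hp i) (hnn i))).1 hsum i (Finset.mem_univ i)
    rcases mul_eq_zero.1 h0 with h0 | h0
    · simp [h0]
    · have h1 := (Finset.sum_eq_zero_iff_of_nonneg (fun j _ => sq_nonneg _)).1 h0
      have h2 : (vw i).1 = (vw i).2 := by
        ext j
        have := h1 j (Finset.mem_univ j)
        exact sub_eq_zero.1 (norm_eq_zero.1 (pow_eq_zero_iff (two_ne_zero) |>.1 this))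
      rw [← hz i]
      simp only [← h2]
  let e := (Fintype.equivFin I).symm
  refine ⟨Fintype.card I, fun i => p (e i), fun i => (vw (e i)).1,
    fun i => ⟨hp _, (hvw _).1.1, (hvw _).1.2⟩, ?_, ?_⟩
  · rw [← hp1]; exact e.sum_comp p
  · rw [Finset.sum_congr rfl fun i _ => heq i]
    exact (e.sum_comp fun i => p i • ketBra (vw i).1 (vw i).1).symm

theorem mem_hull_of_schmidtNumLE {k : ℕ} {X : Matrix (ι × κ) (ι × κ) ℂ}
    (h : SchmidtNumLE k X) {c : ℂ} (hc : ‖c‖ = 1) : c • X ∈ convexHull ℝ (KSet ι κ k) := by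
  obtain ⟨N, p, v, hv, hp, rfl⟩ := h
  refine mem_convexHull_of_exists_fintype p (fun i => c • ketBra (v i) (v i))
    (fun i => (hv i).1) hp (fun i => KSet.smul ⟨(v i, v i), ⟨(hv i).2, (hv i).2⟩, rfl⟩ hc) ?_
  rw [Finset.smul_sum]
  exact Finset.sum_congr rfl fun i _ => smul_comm _ _ _

theorem schmidtNumLE_of_approx {k : ℕ} {X : Matrix (ι × κ) (ι × κ) ℂ} (ht : X.trace = 1)
    (h : ∀ ε : ℝ, 0 < ε → ∃ r : ℝ, r < 1 + ε ∧ 1 ≤ r ∧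
      r⁻¹ • X ∈ convexHull ℝ (KSet ι κ k)) : SchmidtNumLE k X := by
  refine schmidtNumLE_of_mem ?_ ht
  have hcl : IsClosed (convexHull ℝ (KSet ι κ k)) :=
    (isCompact_hull_aux (isCompact_KSet k)).isClosed
  choose r hr using fun n : ℕ => h (1 / ((n : ℝ) + 1)) (by positivity)
  have hlim : Filter.Tendsto r Filter.atTop (nhds 1) := by
    refine tendsto_of_tendsto_of_tendsto_of_le_of_le tendsto_const_nhds
      (h := fun n : ℕ => 1 + 1 / ((n : ℝ) + 1)) ?_ (fun n => (hr n).2.1) (fun n => (hr n).1.le)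
    simpa using tendsto_one_div_add_atTop_nhds_zero_nat.const_add (1 : ℝ)
  have hl2 : Filter.Tendsto (fun n => (r n)⁻¹ • X) Filter.atTop (nhds ((1 : ℝ)⁻¹ • X)) :=
    (hlim.inv₀ one_ne_zero).smul_const X
  simp only [inv_one, one_smul] at hl2
  exact hcl.mem_of_tendsto hl2 (Filter.Eventually.of_forall fun n => (hr n).2.2)

theorem gamma_mem {k : ℕ} {X : Matrix (ι × κ) (ι × κ) ℂ} (ht : X.trace = 1) {N : ℕ}
    {c : Fin N → ℂ} {v w : Fin N → (ι × κ → ℂ)}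
    (h : ∀ i, vinner (v i) (v i) = 1 ∧ vinner (w i) (w i) = 1 ∧
      SchmidtRankLE k (v i) ∧ SchmidtRankLE k (w i))
    (hX : X = ∑ i, c i • ketBra (v i) (w i)) :
    1 ≤ ∑ i, ‖c i‖ ∧ (∑ i, ‖c i‖)⁻¹ • X ∈ convexHull ℝ (KSet ι κ k) := by
  have hpos : 0 < ∑ i, ‖c i‖ := by
    rcases (Finset.sum_nonneg fun i _ => norm_nonneg (c i)).eq_or_lt with h0 | h0
    · exfalso
      have h1 := (Finset.sum_eq_zero_iff_of_nonneg (fun j _ => norm_nonneg _)).1 h0.symm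
      have : X = 0 := by
        rw [hX]
        exact Finset.sum_eq_zero fun i hi => by simp [norm_eq_zero.1 (h1 i hi)]
      simp [this] at ht
    · exact h0
  have hmem : (∑ i, ‖c i‖)⁻¹ • X ∈ convexHull ℝ (KSet ι κ k) := by
    refine mem_convexHull_of_exists_fintype (fun i => (∑ i, ‖c i‖)⁻¹ * ‖c i‖)
      (fun i => (if c i = 0 then 1 else c i / ‖c i‖) • ketBra (v i) (w i))
      (fun i => by positivity) ?_ (fun i => KSet.smul ⟨(v i, w i), ⟨⟨(h i).1, (h i).2.2.1⟩,
        ⟨(h i).2.1, (h i).2.2.2⟩⟩, rfl⟩ ?_) ?_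
    · rw [← Finset.mul_sum, inv_mul_cancel₀ hpos.ne']
    · split_ifs with h0
      · simp
      · simp [h0]
    · rw [hX, Finset.smul_sum]
      refine Finset.sum_congr rfl fun i _ => ?_
      rw [mul_smul]
      congr 1
      split_ifs with h0
      · simp [h0]
      · have : (‖c i‖ : ℂ) ≠ 0 := by simpa using h0
        rw [← Complex.coe_smul, smul_smul, mul_div_cancel₀ _ this]
  refine ⟨?_, hmem⟩
  have := re_trace_le hmem
  rw [Matrix.trace_smul, ht, Complex.smul_re, Complex.one_re, smul_eq_mul, mul_one] at this
  exact (inv_le_one₀ hpos).1 this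

theorem Rk_mem {k : ℕ} {X ρ₁ ρ₂ : Matrix (ι × κ) (ι × κ) ℂ} (ht : X.trace = 1) {c₁ c₂ : ℝ}
    (h1 : 0 ≤ c₁) (h2 : 0 ≤ c₂) (hd1 : IsDensity ρ₁) (hd2 : IsDensity ρ₂)
    (hs1 : SchmidtNumLE k ρ₁) (hs2 : SchmidtNumLE k ρ₂) (hX : X = c₁ • ρ₁ - c₂ • ρ₂) :
    1 ≤ c₁ + c₂ ∧ (c₁ + c₂)⁻¹ • X ∈ convexHull ℝ (KSet ι κ k) := by
  have hge : 1 ≤ c₁ + c₂ := by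
    have := congrArg (fun Y => (Matrix.trace Y).re) hX
    simp [ht, hd1.2, hd2.2] at this
    linarith
  refine ⟨hge, ?_⟩
  have m1 := mem_hull_of_schmidtNumLE hs1 (c := 1) (by simp)
  have m2 := mem_hull_of_schmidtNumLE hs2 (c := -1) (by simp)
  have hp : 0 < c₁ + c₂ := by linarith
  have := (convex_convexHull ℝ (KSet ι κ k)) m1 m2
    (a := (c₁ + c₂)⁻¹ * c₁) (b := (c₁ + c₂)⁻¹ * c₂) (by positivity) (by positivity)
    (by field_simp)
  convert this using 1
  rw [hX, smul_sub, smul_smul, smul_smul]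
  simp [sub_eq_add_neg]

theorem exists_lt_of_sInf {S : Set ℝ} (h : sInf S = 1) {ε : ℝ} (hε : 0 < ε) :
    ∃ r ∈ S, r < 1 + ε := by
  have hne : S.Nonempty := by
    rw [Set.nonempty_iff_ne_empty]
    rintro rfl
    rw [Real.sInf_empty] at h
    norm_num at h
  obtain ⟨r, hr, hlt⟩ := Real.lt_sInf_add_pos hne hε
  exact ⟨r, hr, by rwa [h] at hlt⟩

/-- for a density matrix `ρ`, the following are equivalent: (a) SN(ρ) ≤ k;
(b) ‖ρ‖_{γ,k} = 1; (c) R_k(ρ) = 1. -/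
theorem schmidtNum_le_iff_gammaNorm_eq_one {m n k : ℕ} (hk1 : 1 ≤ k) (hk : k ≤ min m n)
    (ρ : Matrix (Fin m × Fin n) (Fin m × Fin n) ℂ) (hρ : IsDensity ρ) :
    (SchmidtNumLE k ρ ↔ gammaNorm k ρ = 1) ∧ (SchmidtNumLE k ρ ↔ Rk k ρ = 1) := by
  have ht := hρ.2
  refine ⟨⟨fun h => ?_, fun h => ?_⟩, ⟨fun h => ?_, fun h => ?_⟩⟩
  · refine IsLeast.csInf_eq ⟨?_, ?_⟩
    · obtain ⟨N, p, v, hv, hp, hX⟩ := h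
      refine ⟨N, fun i => (p i : ℂ), v, v,
        fun i => ⟨(hv i).2.1, (hv i).2.1, (hv i).2.2, (hv i).2.2⟩, ?_, ?_⟩
      · rw [hX]
        exact Finset.sum_congr rfl fun i _ => (Complex.coe_smul _ _).symm
      · rw [← hp]
        exact Finset.sum_congr rfl fun i _ => by simp [abs_of_nonneg (hv i).1]
    · rintro r ⟨N, c, v, w, h, hX, rfl⟩
      exact (gamma_mem ht h hX).1
  · refine schmidtNumLE_of_approx ht fun ε hε => ?_
    unfold gammaNorm at h
    obtain ⟨r, ⟨N, c, v, w, h, hX, rfl⟩, hr⟩ := exists_lt_of_sInf h hε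
    exact ⟨_, hr, gamma_mem ht h hX⟩
  · refine IsLeast.csInf_eq ⟨?_, ?_⟩
    · exact ⟨1, 0, ρ, ρ, zero_le_one, le_rfl, hρ, hρ, h, h, by simp, by simp⟩
    · rintro r ⟨c₁, c₂, ρ₁, ρ₂, h1, h2, hd1, hd2, hs1, hs2, hX, rfl⟩
      exact (Rk_mem ht h1 h2 hd1 hd2 hs1 hs2 hX).1
  · refine schmidtNumLE_of_approx ht fun ε hε => ?_
    unfold Rk at h
    obtain ⟨r, ⟨c₁, c₂, ρ₁, ρ₂, h1, h2, hd1, hd2, hs1, hs2, hX, rfl⟩, hr⟩ := exists_lt_of_sInf h hε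
    exact ⟨_, hr, Rk_mem ht h1 h2 hd1 hd2 hs1 hs2 hX⟩

end Ent
end
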